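/- arXiv:1711.07925 — 4 statements merged into one kernel-verified Lean document; each statement's English description precedes it below -/
import Mathlib

section
/- Suppose M > 0. Define λ* = M and, for each mode n and each i : Fin (J n), p*^(n)_i = y^(n)_i / M. Then (λ*, p*) is a rank-one feasible point, and for every rank-one feasible point (λ, p) with λ > 0 and with p^(n)_{j_n} > 0 for every mode n and every index j satisfying Y_j > 0, one has L₁(λ*, p*) ≤ L₁(λ, p). (In L₁(λ*, p*), terms Y_j · log p*^(n)_{j_n} with Y_j = 0 contribute zero.) In other words, the KL principal component of a nonnegative tensor is given in closed form by λ = M and the normalized marginals of Y. -/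
/-!
The loss sees `Y` only through its total mass `M` and its marginals, and splits into a function of
`λ` plus one function of each `p⁽ⁿ⁾`. Every piece is minimized by the same tangent-line inequality:
for `a > 0` and `c > 0`, the function `b ↦ c * b - a * log b` is smallest at `b = a / c`. The scale
is the case `a = M`, `c = 1`. In mode `n` one takes `a = y⁽ⁿ⁾ᵢ` and `c = M`, the Lagrange
multiplier of the constraint `∑ i, p⁽ⁿ⁾ᵢ = 1`.
-/

open Finset

lemma sub_mul_log_div_le_mul_sub_mul_log {a b c : ℝ} (ha : 0 ≤ a) (hb : 0 ≤ b) (hc : 0 ≤ c)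
    (hab : 0 < a → 0 < b) (hac : 0 < a → 0 < c) :
    a - a * Real.log (a / c) ≤ c * b - a * Real.log b := by
  rcases ha.eq_or_lt with rfl | ha
  · simpa using mul_nonneg hc hb
  have hb := hab ha
  have hc := hac ha
  have hlog : a * Real.log b - a * Real.log (a / c) ≤ c * b - a :=
    calc a * Real.log b - a * Real.log (a / c)
        = a * Real.log (b / (a / c)) := by
          rw [Real.log_div hb.ne' (div_pos ha hc).ne', mul_sub]
      _ ≤ a * (b / (a / c) - 1) := by
          gcongr
          exact Real.log_le_sub_one_of_pos (by positivity)
      _ = c * b - a := by field_simp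
  linarith

lemma sum_mul_log_le_sum_mul_log_div_sum {α : Type*} [Fintype α] {w p : α → ℝ}
    (hw : ∀ i, 0 ≤ w i) (hp : ∀ i, 0 ≤ p i) (hwp : ∀ i, 0 < w i → 0 < p i)
    (hsum : ∑ i, p i ≤ 1) :
    ∑ i, w i * Real.log (p i) ≤ ∑ i, w i * Real.log (w i / ∑ k, w k) := by
  set W := ∑ k, w k with hW
  have hW_nonneg : 0 ≤ W := sum_nonneg fun i _ => hw i
  have hterm (i : α) : w i - w i * Real.log (w i / W) ≤ W * p i - w i * Real.log (p i) :=
    sub_mul_log_div_le_mul_sub_mul_log (hw i) (hp i) hW_nonneg (hwp i) fun hi =>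
      hi.trans_le (single_le_sum (fun k _ => hw k) (mem_univ i))
  have htotal : W - ∑ i, w i * Real.log (w i / W) ≤
      W * ∑ i, p i - ∑ i, w i * Real.log (p i) := by
    simpa only [sum_sub_distrib, ← mul_sum, ← hW] using sum_le_sum fun i (_ : i ∈ univ) => hterm i
  linarith [mul_le_of_le_one_right hW_nonneg hsum]

section Tensor

variable {ι : Type*} [Fintype ι] [DecidableEq ι] {κ : ι → Type*} [∀ n, Fintype (κ n)]

/-- The rank-one loss `L₁(λ, p)`: up to a term depending only on `Y`, the generalized
Kullback–Leibler divergence from `Y` to `λ p⁽¹⁾ ⊗ ⋯ ⊗ p⁽ᴺ⁾`. The mass of this tensor is written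
`λ`, which presupposes factors summing to one. As `Real.log 0 = 0`, the value is meaningful only for
`λ` positive and `p` positive on the support of `Y`. -/
noncomputable def rankOneKLLoss (Y : (∀ n, κ n) → ℝ) (lam : ℝ) (p : ∀ n, κ n → ℝ) : ℝ :=
  -∑ j, Y j * (Real.log lam + ∑ n, Real.log (p n (j n))) + lam

variable [∀ n, DecidableEq (κ n)]

/-- The `n`-th marginal `y⁽ⁿ⁾` of the tensor `Y`. -/
def tensorMarginal (Y : (∀ n, κ n) → ℝ) (n : ι) (i : κ n) : ℝ :=
  ∑ j with j n = i, Y j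

/-- The candidate factors `p*⁽ⁿ⁾ = y⁽ⁿ⁾ / M`, where `M` is the total mass of `Y`; they are zero
when `M = 0`. -/
noncomputable def normalizedMarginal (Y : (∀ n, κ n) → ℝ) (n : ι) (i : κ n) : ℝ :=
  tensorMarginal Y n i / ∑ j, Y j

lemma tensorMarginal_nonneg {Y : (∀ n, κ n) → ℝ} (hY : ∀ j, 0 ≤ Y j) (n : ι) (i : κ n) :
    0 ≤ tensorMarginal Y n i :=
  sum_nonneg fun j _ => hY j

lemma sum_tensorMarginal (Y : (∀ n, κ n) → ℝ) (n : ι) :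
    ∑ i, tensorMarginal Y n i = ∑ j, Y j :=
  sum_fiberwise univ (fun j : ∀ m, κ m => j n) Y

lemma sum_tensorMarginal_mul (Y : (∀ n, κ n) → ℝ) (n : ι) (f : κ n → ℝ) :
    ∑ i, tensorMarginal Y n i * f i = ∑ j, Y j * f (j n) := by
  rw [← sum_fiberwise univ (fun j : ∀ m, κ m => j n)]
  refine sum_congr rfl fun i _ => ?_
  rw [tensorMarginal, sum_mul]
  exact sum_congr rfl fun j hj => by rw [(mem_filter.mp hj).2]

lemma exists_pos_of_tensorMarginal_pos {Y : (∀ n, κ n) → ℝ} {n : ι} {i : κ n}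
    (hi : 0 < tensorMarginal Y n i) : ∃ j, j n = i ∧ 0 < Y j := by
  obtain ⟨j, hj, hYj⟩ := exists_lt_of_sum_lt (sum_const_zero.trans_lt hi)
  exact ⟨j, (mem_filter.mp hj).2, hYj⟩

lemma normalizedMarginal_mem_stdSimplex {Y : (∀ n, κ n) → ℝ} (hY : ∀ j, 0 ≤ Y j)
    (hM : ∑ j, Y j ≠ 0) (n : ι) : normalizedMarginal Y n ∈ stdSimplex ℝ (κ n) := by
  refine ⟨fun i => div_nonneg (tensorMarginal_nonneg hY n i) (sum_nonneg fun j _ => hY j), ?_⟩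
  simp only [normalizedMarginal]
  rw [← sum_div, sum_tensorMarginal, div_self hM]

lemma rankOneKLLoss_eq_sub_sum_tensorMarginal (Y : (∀ n, κ n) → ℝ) (lam : ℝ)
    (p : ∀ n, κ n → ℝ) :
    rankOneKLLoss Y lam p = lam - (∑ j, Y j) * Real.log lam
      - ∑ n, ∑ i, tensorMarginal Y n i * Real.log (p n i) := by
  have hmodes : ∑ n, ∑ i, tensorMarginal Y n i * Real.log (p n i) =
      ∑ j, Y j * ∑ n, Real.log (p n (j n)) := by
    simp_rw [sum_tensorMarginal_mul Y _ fun i => Real.log (p _ i), mul_sum]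
    exact sum_comm
  rw [rankOneKLLoss, hmodes]
  simp only [mul_add, sum_add_distrib, ← sum_mul]
  ring

lemma rankOneKLLoss_normalizedMarginal_le {Y : (∀ n, κ n) → ℝ} (hY : ∀ j, 0 ≤ Y j)
    {lam : ℝ} {p : ∀ n, κ n → ℝ} (hlam : 0 < lam) (hp : ∀ n i, 0 ≤ p n i)
    (hp_sum : ∀ n, ∑ i, p n i ≤ 1) (hp_pos : ∀ n j, 0 < Y j → 0 < p n (j n)) :
    rankOneKLLoss Y (∑ j, Y j) (normalizedMarginal Y) ≤ rankOneKLLoss Y lam p := by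
  set M := ∑ j, Y j
  have hscale : M - M * Real.log M ≤ lam - M * Real.log lam := by
    simpa using sub_mul_log_div_le_mul_sub_mul_log (sum_nonneg fun j _ => hY j) hlam.le
      zero_le_one (fun _ => hlam) fun _ => one_pos
  have hsupp (n : ι) (i : κ n) (hi : 0 < tensorMarginal Y n i) : 0 < p n i := by
    obtain ⟨j, rfl, hYj⟩ := exists_pos_of_tensorMarginal_pos hi
    exact hp_pos n j hYj
  have hmode (n : ι) : ∑ i, tensorMarginal Y n i * Real.log (p n i) ≤
      ∑ i, tensorMarginal Y n i * Real.log (normalizedMarginal Y n i) := by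
    simpa only [normalizedMarginal, sum_tensorMarginal] using
      sum_mul_log_le_sum_mul_log_div_sum (tensorMarginal_nonneg hY n) (hp n) (hsupp n) (hp_sum n)
  rw [rankOneKLLoss_eq_sub_sum_tensorMarginal, rankOneKLLoss_eq_sub_sum_tensorMarginal]
  exact sub_le_sub hscale (sum_le_sum fun n _ => hmode n)

theorem kl_principal_component_general {Y : (∀ n, κ n) → ℝ} (hY : ∀ j, 0 ≤ Y j)
    (hM : 0 < ∑ j, Y j) :
    (∀ n, normalizedMarginal Y n ∈ stdSimplex ℝ (κ n)) ∧
    ∀ (lam : ℝ) (p : ∀ n, κ n → ℝ),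
      0 < lam → (∀ n i, 0 ≤ p n i) → (∀ n, ∑ i, p n i ≤ 1) →
      (∀ n j, 0 < Y j → 0 < p n (j n)) →
      rankOneKLLoss Y (∑ j, Y j) (normalizedMarginal Y) ≤ rankOneKLLoss Y lam p :=
  ⟨normalizedMarginal_mem_stdSimplex hY hM.ne', fun _ _ hlam hp hp_sum hp_pos =>
    rankOneKLLoss_normalizedMarginal_le hY hlam hp hp_sum hp_pos⟩

end Tensor

/-- **KL principal component in closed form.**
The rank-one generalized KL approximation problem is solved by `λ* = M` and
`p*^(n) = y^(n)/M`, the normalized marginals of the nonnegative tensor `Y`. -/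
theorem kl_principal_component
    (N : ℕ) (hN : 1 ≤ N) (J : Fin N → ℕ) (hJ : ∀ n, 1 ≤ J n)
    (Y : (∀ n, Fin (J n)) → ℝ) (hY : ∀ j, 0 ≤ Y j)
    (M : ℝ) (hM : M = ∑ j : (∀ n, Fin (J n)), Y j) (hMpos : 0 < M)
    (y : ∀ n, Fin (J n) → ℝ)
    (hy : ∀ n i, y n i = ∑ j : (∀ m, Fin (J m)), if j n = i then Y j else 0)
    (L₁ : ℝ → (∀ n, Fin (J n) → ℝ) → ℝ)
    (hL₁ : ∀ lam p, L₁ lam p =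
      -∑ j : (∀ n, Fin (J n)), Y j * (Real.log lam + ∑ n, Real.log (p n (j n))) + lam)
    (lamStar : ℝ) (hlamStar : lamStar = M)
    (pStar : ∀ n, Fin (J n) → ℝ) (hpStar : ∀ n i, pStar n i = y n i / M) :
    (0 ≤ lamStar ∧ (∀ n i, 0 ≤ pStar n i) ∧ (∀ n, ∑ i, pStar n i = 1)) ∧
    (∀ (lam : ℝ) (p : ∀ n, Fin (J n) → ℝ),
      0 < lam → (∀ n i, 0 ≤ p n i) → (∀ n, ∑ i, p n i = 1) →
      (∀ (n : Fin N) (j : ∀ m, Fin (J m)), 0 < Y j → 0 < p n (j n)) →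
      L₁ lamStar pStar ≤ L₁ lam p) := by
  obtain rfl : L₁ = rankOneKLLoss Y := funext₂ hL₁
  obtain rfl : pStar = normalizedMarginal Y := by
    ext n i
    rw [hpStar, hy, hM, normalizedMarginal, tensorMarginal, sum_filter]
  subst lamStar M
  obtain ⟨hsimplex, hmin⟩ := kl_principal_component_general hY hMpos
  exact ⟨⟨hMpos.le, fun n => (hsimplex n).1, fun n => (hsimplex n).2⟩,
    fun lam p hlam hp hp_sum => hmin lam p hlam hp fun n => (hp_sum n).le⟩
end

section
/- Suppose M > 0 and K ≥ 1. Let (λ*, P*) be a rank-K feasible point with ∑_k λ*_k > 0 and with ∑_k λ*_k ∏_n P*^(n)_{j_n k} > 0 for every index j with Y_j > 0, and suppose (λ*, P*) is a global minimizer of the rank-K generalized KL loss L over all rank-K feasible points (λ, P) satisfying ∑_k λ_k ∏_n P^(n)_{j_n k} > 0 for every j with Y_j > 0. Then ∑_k λ*_k = M, i.e., at optimality the sum of the diagonal loadings equals the total mass of the data tensor. -/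
/-!
Rescaling the loadings `lam` by a factor `c > 0` preserves feasibility and, along this ray, the
loss is `c * ∑ k, lam k - (∑ j, Y j) * log c` plus a constant. Its derivative at `c = 1`, namely
`∑ k, lam k - ∑ j, Y j`, vanishes at a minimizer.
-/

lemma hasDerivAt_sum_mul_log_mul {α : Type*} {s : Finset α} {w x : α → ℝ}
    (hx : ∀ i ∈ s, w i ≠ 0 → x i ≠ 0) {c : ℝ} (hc : c ≠ 0) :
    HasDerivAt (fun t ↦ ∑ i ∈ s, w i * Real.log (t * x i)) ((∑ i ∈ s, w i) / c) c := by
  rw [Finset.sum_div]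
  refine HasDerivAt.fun_sum fun i hi ↦ ?_
  obtain hw | hw := eq_or_ne (w i) 0
  · simpa only [hw, zero_mul, zero_div] using hasDerivAt_const c (0 : ℝ)
  · have hxi := hx i hi hw
    have hlog : HasDerivAt (fun t ↦ Real.log (t * x i)) (x i / (c * x i)) c :=
      (hasDerivAt_mul_const (x i)).log (mul_ne_zero hc hxi)
    rw [div_mul_cancel_right₀ hxi] at hlog
    exact hlog.const_mul (w i)

section Tensor

variable {ι κ : Type*} [Fintype ι] [Fintype κ] {J : ι → Type*}

/-- The tensor with canonical polyadic (CP) decomposition given by loadings `lam` and factor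
matrices `P`. The components are indexed by `κ`, so its rank is at most the cardinality of `κ`. -/
def cpTensor (lam : κ → ℝ) (P : ∀ n, J n → κ → ℝ) (j : ∀ n, J n) : ℝ :=
  ∑ k, lam k * ∏ n, P n (j n) k

lemma cpTensor_smul (c : ℝ) (lam : κ → ℝ) (P : ∀ n, J n → κ → ℝ) (j : ∀ n, J n) :
    cpTensor (c • lam) P j = c * cpTensor lam P j := by
  simp only [cpTensor, Pi.smul_apply, smul_eq_mul, Finset.mul_sum, mul_assoc]

variable [∀ n, Fintype (J n)]

/-- The points over which the generalized KL loss of the data tensor `Y` is minimized: nonnegative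
loadings and column-stochastic factor matrices whose CP tensor is positive wherever `Y` is. The
last condition keeps the logarithms in the loss away from the junk value `Real.log 0 = 0`. -/
structure IsKLFeasible (Y : (∀ n, J n) → ℝ) (lam : κ → ℝ) (P : ∀ n, J n → κ → ℝ) : Prop where
  loading_nonneg : ∀ k, 0 ≤ lam k
  factor_nonneg : ∀ n i k, 0 ≤ P n i k
  sum_factor_eq_one : ∀ n k, ∑ i, P n i k = 1
  cpTensor_pos : ∀ j, 0 < Y j → 0 < cpTensor lam P j

lemma IsKLFeasible.smul {Y : (∀ n, J n) → ℝ} {lam : κ → ℝ} {P : ∀ n, J n → κ → ℝ}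
    (h : IsKLFeasible Y lam P) {c : ℝ} (hc : 0 < c) : IsKLFeasible Y (c • lam) P where
  loading_nonneg k := mul_nonneg hc.le (h.loading_nonneg k)
  factor_nonneg := h.factor_nonneg
  sum_factor_eq_one := h.sum_factor_eq_one
  cpTensor_pos j hj := by
    rw [cpTensor_smul]
    exact mul_pos hc (h.cpTensor_pos j hj)

variable [DecidableEq ι]

/-- The generalized Kullback–Leibler loss of the CP tensor of `(lam, P)` against the data `Y`, up
to terms depending only on `Y`. The total mass of the CP tensor enters as `∑ k, lam k`, which is
its value for column-stochastic factor matrices. -/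
noncomputable def klLoss (Y : (∀ n, J n) → ℝ) (lam : κ → ℝ) (P : ∀ n, J n → κ → ℝ) : ℝ :=
  -(∑ j, Y j * Real.log (cpTensor lam P j)) + ∑ k, lam k

variable {Y : (∀ n, J n) → ℝ} {lam : κ → ℝ} {P : ∀ n, J n → κ → ℝ}

lemma hasDerivAt_klLoss_smul (hP : ∀ j, Y j ≠ 0 → cpTensor lam P j ≠ 0) {c : ℝ} (hc : c ≠ 0) :
    HasDerivAt (fun t : ℝ ↦ klLoss Y (t • lam) P) (-((∑ j, Y j) / c) + ∑ k, lam k) c := by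
  simp only [klLoss, cpTensor_smul, Pi.smul_apply, smul_eq_mul, ← Finset.mul_sum]
  exact (hasDerivAt_sum_mul_log_mul (fun j _ ↦ hP j) hc).neg.add
    (hasDerivAt_mul_const (∑ k, lam k))

lemma IsKLFeasible.isLocalMin_klLoss_smul (h : IsKLFeasible Y lam P)
    (hmin : ∀ lam', IsKLFeasible Y lam' P → klLoss Y lam P ≤ klLoss Y lam' P) :
    IsLocalMin (fun c : ℝ ↦ klLoss Y (c • lam) P) 1 := by
  filter_upwards [Ioi_mem_nhds one_pos] with c hc
  simpa only [one_smul] using hmin (c • lam) (h.smul hc)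

theorem sum_loadings_eq_mass_at_optimum_general (hP : ∀ j, Y j ≠ 0 → 0 < cpTensor lam P j)
    (hmin : IsLocalMin (fun c : ℝ ↦ klLoss Y (c • lam) P) 1) :
    ∑ k, lam k = ∑ j, Y j := by
  have hderiv : -((∑ j, Y j) / 1) + ∑ k, lam k = 0 :=
    hmin.hasDerivAt_eq_zero (hasDerivAt_klLoss_smul (fun j hj ↦ (hP j hj).ne') one_ne_zero)
  linarith

end Tensor

/-- **Lemma (sum of diagonal loadings at optimality).**
At a global minimizer of the rank-`K` generalized KL loss, the sum of the
diagonal loadings equals the total mass `M` of the data tensor. -/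
theorem sum_loadings_eq_mass_at_optimum
    (N : ℕ) (hN : 1 ≤ N) (J : Fin N → ℕ) (hJ : ∀ n, 1 ≤ J n)
    (Y : (∀ n, Fin (J n)) → ℝ) (hY : ∀ j, 0 ≤ Y j)
    (M : ℝ) (hM : M = ∑ j : (∀ n, Fin (J n)), Y j) (hMpos : 0 < M)
    (K : ℕ) (hK : 1 ≤ K)
    (L : (Fin K → ℝ) → (∀ n, Fin (J n) → Fin K → ℝ) → ℝ)
    (hL : ∀ lam P, L lam P =
      -(∑ j : (∀ n, Fin (J n)),
          Y j * Real.log (∑ k, lam k * ∏ n, P n (j n) k)) + ∑ k, lam k)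
    (lamStar : Fin K → ℝ) (PStar : ∀ n, Fin (J n) → Fin K → ℝ)
    (hlamStar : ∀ k, 0 ≤ lamStar k)
    (hPStar : ∀ n i k, 0 ≤ PStar n i k)
    (hPStarcol : ∀ n k, ∑ i, PStar n i k = 1)
    (hsum : 0 < ∑ k, lamStar k)
    (hpos : ∀ j : (∀ n, Fin (J n)), 0 < Y j →
      0 < ∑ k, lamStar k * ∏ n, PStar n (j n) k)
    (hopt : ∀ (lam : Fin K → ℝ) (P : ∀ n, Fin (J n) → Fin K → ℝ),
      (∀ k, 0 ≤ lam k) → (∀ n i k, 0 ≤ P n i k) → (∀ n k, ∑ i, P n i k = 1) →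
      (∀ j : (∀ n, Fin (J n)), 0 < Y j → 0 < ∑ k, lam k * ∏ n, P n (j n) k) →
      L lamStar PStar ≤ L lam P) :
    ∑ k, lamStar k = M := by
  obtain rfl : L = klLoss Y := funext₂ hL
  have hfeas : IsKLFeasible Y lamStar PStar := ⟨hlamStar, hPStar, hPStarcol, hpos⟩
  exact hM ▸ sum_loadings_eq_mass_at_optimum_general
    (fun j hj ↦ hpos j ((hY j).lt_of_ne' hj))
    (hfeas.isLocalMin_klLoss_smul fun lam h ↦ hopt lam PStar h.1 h.2 h.3 h.4)
end

section
/- Suppose M > 0 and K ≥ 1. Let (λ*, P*) be a rank-K feasible point with ∑_k λ*_k > 0 and with ∑_k λ*_k ∏_n P*^(n)_{j_n k} > 0 for every index j with Y_j > 0, and suppose (λ*, P*) globally minimizes the rank-K generalized KL loss L over all rank-K feasible points (λ, P) satisfying ∑_k λ_k ∏_n P^(n)_{j_n k} > 0 for every j with Y_j > 0. Define λ̄* = λ*/(∑_k λ*_k). Then (λ̄*, P*) globally minimizes the negative log-likelihood NLL over the normalized feasible set: for every λ̄ : Fin K → ℝ with λ̄ ≥ 0 and ∑_k λ̄_k = 1,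 and every column-stochastic nonnegative P, with ∑_k λ̄_k ∏_n P^(n)_{j_n k} > 0 for every j with Y_j > 0, one has NLL(λ̄*, P*) ≤ NLL(λ̄, P). That is, minimizing the generalized KL divergence is equivalent to maximum likelihood estimation in the multinomial latent variable model. -/
/-!
Write a nonzero weight vector as `w = s • w'` with `s = ∑ k, w k`. The mixture is linear in the
weights, so the logarithm splits off `s` and the generalized KL loss of `w` is the negative
log-likelihood of `w'` plus `s - (∑ j, Y j) * log s`. Hence at a fixed total weight the two
objectives differ by a constant, and rescaling a normalized competitor to the total weight of the
KL minimizer turns the KL inequality into the likelihood inequality.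
-/

open scoped Matrix

section LogLikelihood

variable {ι κ : Type*} [Fintype ι]

/-- The negative log-likelihood of the data `Y` at the fitted values `μ`, without the multinomial
coefficient. It is meant for `μ` positive wherever `Y` is nonzero: elsewhere the convention
`Real.log 0 = 0` replaces an infinite penalty by zero. -/
noncomputable def negLogLikelihood (Y μ : ι → ℝ) : ℝ :=
  -∑ j, Y j * Real.log (μ j)

theorem negLogLikelihood_smul {Y μ : ι → ℝ} {c : ℝ} (hc : c ≠ 0)
    (hμ : ∀ j, Y j ≠ 0 → μ j ≠ 0) :
    negLogLikelihood Y (c • μ) = negLogLikelihood Y μ - (∑ j, Y j) * Real.log c := by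
  have hterm (j : ι) :
      Y j * Real.log ((c • μ) j) = Y j * Real.log (μ j) + Y j * Real.log c := by
    by_cases hj : Y j = 0
    · simp [hj]
    · rw [Pi.smul_apply, smul_eq_mul, Real.log_mul hc (hμ j hj)]
      ring
  simp only [negLogLikelihood, hterm, Finset.sum_add_distrib, ← Finset.sum_mul]
  ring

variable [Fintype κ]

/-- The generalized Kullback–Leibler loss of the mixture `w ᵥ* Q`, up to an additive constant
depending only on `Y`. Row `k` of `Q` holds the cell probabilities of component `k`, so that
`∑ k, w k` is the total mass of the mixture. -/
noncomputable def generalizedKLLoss (Y : ι → ℝ) (w : κ → ℝ) (Q : Matrix κ ι ℝ) : ℝ :=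
  negLogLikelihood Y (w ᵥ* Q) + ∑ k, w k

theorem generalizedKLLoss_smul {Y : ι → ℝ} {w : κ → ℝ} {Q : Matrix κ ι ℝ} {c : ℝ} (hc : c ≠ 0)
    (hμ : ∀ j, Y j ≠ 0 → (w ᵥ* Q) j ≠ 0) :
    generalizedKLLoss Y (c • w) Q =
      negLogLikelihood Y (w ᵥ* Q) - (∑ j, Y j) * Real.log c + c * ∑ k, w k := by
  simp only [generalizedKLLoss, Matrix.smul_vecMul, negLogLikelihood_smul hc hμ, Pi.smul_apply,
    smul_eq_mul, Finset.mul_sum]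

end LogLikelihood

section MixtureModel

variable {ι κ Θ : Type*} [Fintype κ]

/-- The parameters `(w, θ)` of the mixture model with component matrix `Q θ`, `θ ∈ T`, whose
mixture `w ᵥ* Q θ` is positive on the support of the data `Y`. -/
def mixtureFeasibleSet (Y : ι → ℝ) (Q : Θ → Matrix κ ι ℝ) (T : Set Θ) : Set ((κ → ℝ) × Θ) :=
  {p | 0 ≤ p.1 ∧ p.2 ∈ T ∧ ∀ j, Y j ≠ 0 → 0 < (p.1 ᵥ* Q p.2) j}

/-- The parameters in `mixtureFeasibleSet` whose weights form a probability vector. -/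
def normalizedFeasibleSet (Y : ι → ℝ) (Q : Θ → Matrix κ ι ℝ) (T : Set Θ) : Set ((κ → ℝ) × Θ) :=
  {p ∈ mixtureFeasibleSet Y Q T | ∑ k, p.1 k = 1}

variable {Y : ι → ℝ} {Q : Θ → Matrix κ ι ℝ} {T : Set Θ} {w : κ → ℝ} {θ : Θ}

theorem smul_mem_mixtureFeasibleSet {c : ℝ} (hc : 0 < c) (h : (w, θ) ∈ mixtureFeasibleSet Y Q T) :
    (c • w, θ) ∈ mixtureFeasibleSet Y Q T := by
  obtain ⟨hw, hθ, hpos⟩ := h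
  refine ⟨smul_nonneg hc.le hw, hθ, fun j hj => ?_⟩
  rw [Matrix.smul_vecMul]
  exact mul_pos hc (hpos j hj)

theorem inv_sum_smul_mem_normalizedFeasibleSet (hsum : 0 < ∑ k, w k)
    (h : (w, θ) ∈ mixtureFeasibleSet Y Q T) :
    ((∑ k, w k)⁻¹ • w, θ) ∈ normalizedFeasibleSet Y Q T := by
  refine ⟨smul_mem_mixtureFeasibleSet (inv_pos.2 hsum) h, ?_⟩
  simp only [Pi.smul_apply, smul_eq_mul, ← Finset.mul_sum, inv_mul_cancel₀ hsum.ne']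

theorem generalizedKLLoss_smul_of_mem_normalizedFeasibleSet [Fintype ι] {c : ℝ} (hc : c ≠ 0)
    (h : (w, θ) ∈ normalizedFeasibleSet Y Q T) :
    generalizedKLLoss Y (c • w) (Q θ) =
      negLogLikelihood Y (w ᵥ* Q θ) + (c - (∑ j, Y j) * Real.log c) := by
  obtain ⟨⟨-, -, hpos⟩, hw⟩ := h
  rw [generalizedKLLoss_smul hc fun j hj => (hpos j hj).ne', hw]
  ring

theorem kl_minimizer_gives_ml_estimate_general [Fintype ι] (hsum : 0 < ∑ k, w k)
    (hmem : (w, θ) ∈ mixtureFeasibleSet Y Q T)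
    (hmin : IsMinOn (fun p => generalizedKLLoss Y p.1 (Q p.2)) (mixtureFeasibleSet Y Q T) (w, θ)) :
    IsMinOn (fun p => negLogLikelihood Y (p.1 ᵥ* Q p.2)) (normalizedFeasibleSet Y Q T)
      ((∑ k, w k)⁻¹ • w, θ) := by
  refine isMinOn_iff.2 fun ⟨v, η⟩ hv => ?_
  set s := ∑ k, w k
  have hle : generalizedKLLoss Y (s • s⁻¹ • w) (Q θ) ≤ generalizedKLLoss Y (s • v) (Q η) := by
    rw [smul_inv_smul₀ hsum.ne']
    exact isMinOn_iff.1 hmin (s • v, η) (smul_mem_mixtureFeasibleSet hsum hv.1)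
  rw [generalizedKLLoss_smul_of_mem_normalizedFeasibleSet hsum.ne'
      (inv_sum_smul_mem_normalizedFeasibleSet hsum hmem),
    generalizedKLLoss_smul_of_mem_normalizedFeasibleSet hsum.ne' hv] at hle
  exact le_of_add_le_add_right hle

end MixtureModel

/-- The components of the multinomial latent variable model: given the latent class `k`, the
coordinates of the index `j` are independent, the `n`-th one with distribution `P n · k`. -/
def latentClassMatrix {ν κ : Type*} [Fintype ν] {α : ν → Type*} (P : ∀ n, α n → κ → ℝ) :
    Matrix κ (∀ n, α n) ℝ :=
  Matrix.of fun k j => ∏ n, P n (j n) k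

/-- **Equivalence of generalized KL fitting and maximum likelihood.**
If `(λ*, P*)` globally minimizes the rank-`K` generalized KL loss, then the
normalized point `(λ*/(∑ λ*), P*)` globally minimizes the negative
log-likelihood of the multinomial latent variable model. -/
theorem kl_minimizer_gives_ml_estimate
    (N : ℕ) (hN : 1 ≤ N) (J : Fin N → ℕ) (hJ : ∀ n, 1 ≤ J n)
    (Y : (∀ n, Fin (J n)) → ℝ) (hY : ∀ j, 0 ≤ Y j)
    (M : ℝ) (hM : M = ∑ j : (∀ n, Fin (J n)), Y j) (hMpos : 0 < M)
    (K : ℕ) (hK : 1 ≤ K)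
    (L : (Fin K → ℝ) → (∀ n, Fin (J n) → Fin K → ℝ) → ℝ)
    (hL : ∀ lam P, L lam P =
      -(∑ j : (∀ n, Fin (J n)),
          Y j * Real.log (∑ k, lam k * ∏ n, P n (j n) k)) + ∑ k, lam k)
    (NLL : (Fin K → ℝ) → (∀ n, Fin (J n) → Fin K → ℝ) → ℝ)
    (hNLL : ∀ lamBar P, NLL lamBar P =
      -(∑ j : (∀ n, Fin (J n)),
          Y j * Real.log (∑ k, lamBar k * ∏ n, P n (j n) k)))
    (lamStar : Fin K → ℝ) (PStar : ∀ n, Fin (J n) → Fin K → ℝ)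
    (hlamStar : ∀ k, 0 ≤ lamStar k)
    (hPStar : ∀ n i k, 0 ≤ PStar n i k)
    (hPStarcol : ∀ n k, ∑ i, PStar n i k = 1)
    (hsum : 0 < ∑ k, lamStar k)
    (hpos : ∀ j : (∀ n, Fin (J n)), 0 < Y j →
      0 < ∑ k, lamStar k * ∏ n, PStar n (j n) k)
    (hopt : ∀ (lam : Fin K → ℝ) (P : ∀ n, Fin (J n) → Fin K → ℝ),
      (∀ k, 0 ≤ lam k) → (∀ n i k, 0 ≤ P n i k) → (∀ n k, ∑ i, P n i k = 1) →
      (∀ j : (∀ n, Fin (J n)), 0 < Y j → 0 < ∑ k, lam k * ∏ n, P n (j n) k) →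
      L lamStar PStar ≤ L lam P)
    (lamBarStar : Fin K → ℝ)
    (hlamBarStar : ∀ k, lamBarStar k = lamStar k / (∑ κ, lamStar κ)) :
    ∀ (lamBar : Fin K → ℝ) (P : ∀ n, Fin (J n) → Fin K → ℝ),
      (∀ k, 0 ≤ lamBar k) → (∑ k, lamBar k = 1) →
      (∀ n i k, 0 ≤ P n i k) → (∀ n k, ∑ i, P n i k = 1) →
      (∀ j : (∀ n, Fin (J n)), 0 < Y j → 0 < ∑ k, lamBar k * ∏ n, P n (j n) k) →
      NLL lamBarStar PStar ≤ NLL lamBar P := by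
  obtain rfl : lamBarStar = (∑ k, lamStar k)⁻¹ • lamStar :=
    funext fun k => (hlamBarStar k).trans (div_eq_inv_mul _ _)
  have hmin := kl_minimizer_gives_ml_estimate_general (Y := Y) (Q := latentClassMatrix)
    (T := {P | (∀ n i k, 0 ≤ P n i k) ∧ ∀ n k, ∑ i, P n i k = 1}) hsum
    ⟨hlamStar, ⟨hPStar, hPStarcol⟩, fun j hj => hpos j ((hY j).lt_of_ne' hj)⟩
    (isMinOn_iff.2 fun ⟨lam, P⟩ ⟨hlam, ⟨hP, hPcol⟩, hPpos⟩ => by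
      have hle := hopt lam P hlam hP hPcol fun j hj => hPpos j hj.ne'
      rwa [hL, hL] at hle)
  intro lamBar P hlamBar hlamBarSum hP hPcol hPpos
  rw [hNLL, hNLL]
  exact isMinOn_iff.1 hmin (lamBar, P)
    ⟨⟨hlamBar, ⟨hP, hPcol⟩, fun j hj => hPpos j ((hY j).lt_of_ne' hj)⟩, hlamBarSum⟩
end

section
/- Let K ≥ 1 and let (λᵗ, Pᵗ) be a rank-K feasible point with λᵗ_k > 0 for all k and Pᵗ^(n)_{i k} > 0 for all n, i, k. Define Ψ_{j k} = λᵗ_k ∏_n Pᵗ^(n)_{j_n k} / (∑_κ λᵗ_κ ∏_n Pᵗ^(n)_{j_n κ}) for each index j and each k, and define the surrogate G(λ, P) = -∑_j Y_j ∑_k Ψ_{j k} ( log λ_k + ∑_n log P^(n)_{j_n k} − log Ψ_{j k} ) + ∑_k λ_k. Then: (i) for every rank-K feasible point (λ, P) with λ_k > 0 for all k and P^(n)_{i k} > 0 for all n, i, k, one has L(λ, P) ≤ G(λ, P); and (ii) G(λᵗ, Pᵗ) = L(λᵗ, Pᵗ), i.e., the surrogate majorizes the generalized KL loss and is tight at the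 current iterate. -/
/-!
For each index `j`, the loss contains the logarithm of a sum over `k`. The tangent-line bound
`log t ≤ t - 1` gives the evidence lower bound `∑ k, w k * (log (x k) - log (w k)) ≤ log (∑ k, x k)`
for all probability weights `w`, with equality when `w` is proportional to `x`. Weighting by
`Y j ≥ 0` and changing sign turns the lower bound into majorization, and the posterior weights are
exactly the proportional ones at the current iterate.
-/

section EvidenceLowerBound

open Real

theorem mul_log_sub_log_le_sub {w x : ℝ} (hw : 0 ≤ w) (hx : 0 < x) :
    w * (log x - log w) ≤ x - w := by
  obtain rfl | hw := hw.eq_or_lt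
  · simpa using hx.le
  · calc
      w * (log x - log w) = w * log (x / w) := by rw [log_div hx.ne' hw.ne']
      _ ≤ w * (x / w - 1) := by gcongr; exact log_le_sub_one_of_pos (div_pos hx hw)
      _ = x - w := by rw [mul_sub_one, mul_div_cancel₀ _ hw.ne']

variable {κ : Type*} {s : Finset κ} {w x : κ → ℝ}

theorem sum_mul_log_sub_log_le_log_sum (hw : ∀ k ∈ s, 0 ≤ w k) (hw_sum : ∑ k ∈ s, w k = 1)
    (hx : ∀ k ∈ s, 0 < x k) :
    ∑ k ∈ s, w k * (log (x k) - log (w k)) ≤ log (∑ k ∈ s, x k) := by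
  have hs : s.Nonempty := Finset.nonempty_of_sum_ne_zero (hw_sum ▸ one_ne_zero)
  set S := ∑ k ∈ s, x k with hS_def
  have hS : 0 < S := Finset.sum_pos hx hs
  have normalized_term_le (k) (hk : k ∈ s) :
      w k * (log (x k) - log (w k)) - w k * log S ≤ x k / S - w k := by
    have h := mul_log_sub_log_le_sub (hw k hk) (div_pos (hx k hk) hS)
    rw [log_div (hx k hk).ne' hS.ne'] at h
    linarith
  have sum_le := Finset.sum_le_sum normalized_term_le
  rw [Finset.sum_sub_distrib, Finset.sum_sub_distrib, ← Finset.sum_mul, ← Finset.sum_div, hw_sum,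
    ← hS_def, div_self hS.ne'] at sum_le
  linarith

theorem sum_div_sum_mul_log_sub_log_eq_log_sum (hS : ∑ k ∈ s, x k ≠ 0) :
    ∑ k ∈ s, x k / (∑ l ∈ s, x l) * (log (x k) - log (x k / ∑ l ∈ s, x l)) =
      log (∑ k ∈ s, x k) := by
  set S := ∑ k ∈ s, x k with hS_def
  have term_eq (k) : x k / S * (log (x k) - log (x k / S)) = x k / S * log S := by
    obtain hx | hx := eq_or_ne (x k) 0
    · simp [hx]
    · rw [log_div hx hS, sub_sub_cancel]
  simp only [term_eq]
  rw [← Finset.sum_mul, ← Finset.sum_div, ← hS_def, div_self hS, one_mul]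

end EvidenceLowerBound

section CPModel

variable {ι κ : Type*} [Fintype ι] {α : ι → Type*}

/-- The `k`-th rank-one term, at index `j`, of the canonical polyadic (CP) tensor with weights `lam`
and factor matrices `P`. -/
def cpTerm (lam : κ → ℝ) (P : ∀ n, α n → κ → ℝ) (j : ∀ n, α n) (k : κ) : ℝ :=
  lam k * ∏ n, P n (j n) k

/-- The posterior responsibility `Ψ` of component `k` for index `j` in the CP model `(lam, P)`: the
share of the `k`-th term in the CP tensor entry at `j`. -/
noncomputable def cpPosterior [Fintype κ] (lam : κ → ℝ) (P : ∀ n, α n → κ → ℝ)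
    (j : ∀ n, α n) (k : κ) : ℝ :=
  cpTerm lam P j k / ∑ l, cpTerm lam P j l

/-- The generalized Kullback–Leibler loss `L` of the CP model `(lam, P)` for the data tensor `Y`, up
to terms depending on `Y` only. The total mass of the model is written `∑ k, lam k`, which is its
value when the columns of `P` sum to one. -/
noncomputable def cpLoss [DecidableEq ι] [∀ n, Fintype (α n)] [Fintype κ] (Y : (∀ n, α n) → ℝ)
    (lam : κ → ℝ) (P : ∀ n, α n → κ → ℝ) : ℝ :=
  -(∑ j, Y j * Real.log (∑ k, cpTerm lam P j k)) + ∑ k, lam k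

/-- The expectation–maximization surrogate `G` of `cpLoss`, for arbitrary responsibilities `Ψ`. -/
noncomputable def cpSurrogate [DecidableEq ι] [∀ n, Fintype (α n)] [Fintype κ]
    (Y : (∀ n, α n) → ℝ) (Ψ : (∀ n, α n) → κ → ℝ) (lam : κ → ℝ) (P : ∀ n, α n → κ → ℝ) : ℝ :=
  -(∑ j, Y j * ∑ k, Ψ j k *
      (Real.log (lam k) + (∑ n, Real.log (P n (j n) k)) - Real.log (Ψ j k))) + ∑ k, lam k

variable {lam : κ → ℝ} {P : ∀ n, α n → κ → ℝ}

theorem cpTerm_nonneg (hlam : ∀ k, 0 ≤ lam k) (hP : ∀ n i k, 0 ≤ P n i k) (j : ∀ n, α n) (k : κ) :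
    0 ≤ cpTerm lam P j k :=
  mul_nonneg (hlam k) (Finset.prod_nonneg fun n _ => hP n (j n) k)

theorem cpTerm_pos (hlam : ∀ k, 0 < lam k) (hP : ∀ n i k, 0 < P n i k) (j : ∀ n, α n) (k : κ) :
    0 < cpTerm lam P j k :=
  mul_pos (hlam k) (Finset.prod_pos fun n _ => hP n (j n) k)

theorem log_cpTerm {j : ∀ n, α n} {k : κ} (hlam : lam k ≠ 0) (hP : ∀ n, P n (j n) k ≠ 0) :
    Real.log (cpTerm lam P j k) = Real.log (lam k) + ∑ n, Real.log (P n (j n) k) := by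
  rw [cpTerm, Real.log_mul hlam (Finset.prod_ne_zero_iff.mpr fun n _ => hP n),
    Real.log_prod fun n _ => hP n]

variable [Fintype κ]

theorem sum_cpTerm_pos [Nonempty κ] (hlam : ∀ k, 0 < lam k) (hP : ∀ n i k, 0 < P n i k)
    (j : ∀ n, α n) : 0 < ∑ k, cpTerm lam P j k :=
  Finset.sum_pos (fun k _ => cpTerm_pos hlam hP j k) Finset.univ_nonempty

theorem cpPosterior_nonneg (hlam : ∀ k, 0 ≤ lam k) (hP : ∀ n i k, 0 ≤ P n i k)
    (j : ∀ n, α n) (k : κ) : 0 ≤ cpPosterior lam P j k :=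
  div_nonneg (cpTerm_nonneg hlam hP j k) (Finset.sum_nonneg fun l _ => cpTerm_nonneg hlam hP j l)

theorem sum_cpPosterior {j : ∀ n, α n} (hj : ∑ k, cpTerm lam P j k ≠ 0) :
    ∑ k, cpPosterior lam P j k = 1 := by
  simp only [cpPosterior, ← Finset.sum_div, div_self hj]

variable [DecidableEq ι] [∀ n, Fintype (α n)] {Y : (∀ n, α n) → ℝ}

theorem cpSurrogate_eq_of_ne_zero (Ψ : (∀ n, α n) → κ → ℝ) (hlam : ∀ k, lam k ≠ 0)
    (hP : ∀ n i k, P n i k ≠ 0) :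
    cpSurrogate Y Ψ lam P =
      -(∑ j, Y j * ∑ k, Ψ j k * (Real.log (cpTerm lam P j k) - Real.log (Ψ j k))) +
        ∑ k, lam k := by
  simp only [cpSurrogate, log_cpTerm (hlam _) fun n => hP n _ _]

theorem cpLoss_le_cpSurrogate {Ψ : (∀ n, α n) → κ → ℝ} (hY : ∀ j, 0 ≤ Y j)
    (hΨ : ∀ j k, 0 ≤ Ψ j k) (hΨ_sum : ∀ j, ∑ k, Ψ j k = 1) (hlam : ∀ k, 0 < lam k)
    (hP : ∀ n i k, 0 < P n i k) :
    cpLoss Y lam P ≤ cpSurrogate Y Ψ lam P := by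
  rw [cpLoss, cpSurrogate_eq_of_ne_zero Ψ (fun k => (hlam k).ne') fun n i k => (hP n i k).ne']
  gcongr with j
  · exact hY j
  · exact sum_mul_log_sub_log_le_log_sum (fun k _ => hΨ j k) (hΨ_sum j)
      fun k _ => cpTerm_pos hlam hP j k

theorem cpSurrogate_cpPosterior_self (hlam : ∀ k, lam k ≠ 0) (hP : ∀ n i k, P n i k ≠ 0)
    (hsum : ∀ j, ∑ k, cpTerm lam P j k ≠ 0) :
    cpSurrogate Y (cpPosterior lam P) lam P = cpLoss Y lam P := by
  rw [cpLoss, cpSurrogate_eq_of_ne_zero _ hlam hP]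
  simp only [cpPosterior, sum_div_sum_mul_log_sub_log_eq_log_sum (hsum _)]

theorem surrogate_majorizes_kl_loss_general [Nonempty κ] (hY : ∀ j, 0 ≤ Y j)
    {lamT : κ → ℝ} {PT : ∀ n, α n → κ → ℝ} (hlamT : ∀ k, 0 < lamT k)
    (hPT : ∀ n i k, 0 < PT n i k) :
    (∀ (lam : κ → ℝ) (P : ∀ n, α n → κ → ℝ), (∀ k, 0 < lam k) → (∀ n i k, 0 < P n i k) →
      cpLoss Y lam P ≤ cpSurrogate Y (cpPosterior lamT PT) lam P) ∧
    cpSurrogate Y (cpPosterior lamT PT) lamT PT = cpLoss Y lamT PT := by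
  have hsum (j) : ∑ k, cpTerm lamT PT j k ≠ 0 := (sum_cpTerm_pos hlamT hPT j).ne'
  have hΨ := cpPosterior_nonneg (fun k => (hlamT k).le) fun n i k => (hPT n i k).le
  exact ⟨fun lam P => cpLoss_le_cpSurrogate hY hΨ fun j => sum_cpPosterior (hsum j),
    cpSurrogate_cpPosterior_self (fun k => (hlamT k).ne') (fun n i k => (hPT n i k).ne') hsum⟩

end CPModel

/-- **Majorization of the generalized KL loss by the EM surrogate.**
The surrogate `G` built from the posterior weights `Ψ` at the current iterate
`(λᵗ, Pᵗ)` upper-bounds the rank-`K` generalized KL loss `L` on strictly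
positive feasible points, and is tight at `(λᵗ, Pᵗ)`. -/
theorem surrogate_majorizes_kl_loss
    (N : ℕ) (hN : 1 ≤ N) (J : Fin N → ℕ) (hJ : ∀ n, 1 ≤ J n)
    (Y : (∀ n, Fin (J n)) → ℝ) (hY : ∀ j, 0 ≤ Y j)
    (K : ℕ) (hK : 1 ≤ K)
    (L : (Fin K → ℝ) → (∀ n, Fin (J n) → Fin K → ℝ) → ℝ)
    (hL : ∀ lam P, L lam P =
      -(∑ j : (∀ n, Fin (J n)),
          Y j * Real.log (∑ k, lam k * ∏ n, P n (j n) k)) + ∑ k, lam k)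
    (lamT : Fin K → ℝ) (PT : ∀ n, Fin (J n) → Fin K → ℝ)
    (hlamT : ∀ k, 0 < lamT k)
    (hPT : ∀ n i k, 0 < PT n i k)
    (hPTcol : ∀ n k, ∑ i, PT n i k = 1)
    (Ψ : (∀ n, Fin (J n)) → Fin K → ℝ)
    (hΨ : ∀ j k, Ψ j k =
      lamT k * (∏ n, PT n (j n) k) / (∑ κ, lamT κ * ∏ n, PT n (j n) κ))
    (G : (Fin K → ℝ) → (∀ n, Fin (J n) → Fin K → ℝ) → ℝ)
    (hG : ∀ lam P, G lam P =
      -(∑ j : (∀ n, Fin (J n)), Y j * ∑ k, Ψ j k *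
          (Real.log (lam k) + (∑ n, Real.log (P n (j n) k)) - Real.log (Ψ j k)))
        + ∑ k, lam k) :
    (∀ (lam : Fin K → ℝ) (P : ∀ n, Fin (J n) → Fin K → ℝ),
      (∀ k, 0 < lam k) → (∀ n i k, 0 < P n i k) → (∀ n k, ∑ i, P n i k = 1) →
      L lam P ≤ G lam P) ∧
    G lamT PT = L lamT PT := by
  have : Nonempty (Fin K) := ⟨⟨0, hK⟩⟩
  obtain rfl : L = cpLoss Y := funext₂ hL
  obtain rfl : Ψ = cpPosterior lamT PT := funext₂ hΨ
  obtain rfl : G = cpSurrogate Y (cpPosterior lamT PT) := funext₂ hG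
  have ⟨majorizes, tight⟩ := surrogate_majorizes_kl_loss_general hY hlamT hPT
  exact ⟨fun lam P hlam hP _ => majorizes lam P hlam hP, tight⟩
end
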